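/- For a function F : [0,∞) → ℝ, the following are equivalent: (1) for every totally non-negative Hankel matrix A of any finite size, the entrywise image F[A] is positive semidefinite; (2) for every totally non-negative Hankel matrix A of any finite size, F[A] is again a totally non-negative Hankel matrix; (3) F applied entrywise maps M([0,∞)) into itself; (4) F agrees on (0,∞) with an absolutely monotonic entire function, and 0 ≤ F(0) ≤ lim_{ε→0⁺} F(ε). -/

import Mathlib

open MeasureTheory Filter Set
open scoped ENNReal

/-- An admissible measure: a non-negative Borel measure on `ℝ` all of whose absolute
moments are finite. -/
def IsAdmissible (μ : Measure ℝ) : Prop := ∀ k : ℕ, Integrable (fun x => x ^ k) μ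

/-- The `k`-th power moment of a measure. -/
noncomputable def moment (μ : Measure ℝ) (k : ℕ) : ℝ := ∫ x, x ^ k ∂μ

/-- `momentSet K` is the set of moment sequences of admissible measures supported in `K`. -/
def momentSet (K : Set ℝ) : Set (ℕ → ℝ) :=
  {s | ∃ μ : Measure ℝ, IsAdmissible μ ∧ μ Kᶜ = 0 ∧ ∀ k, s k = moment μ k}

/-- An absolutely monotonic entire function: a power series with non-negative
coefficients converging at every real point. -/
def AbsolutelyMonotonicEntire (G : ℝ → ℝ) : Prop :=
  ∃ c : ℕ → ℝ, (∀ n, 0 ≤ c n) ∧ ∀ x : ℝ, HasSum (fun n => c n * x ^ n) (G x)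

/-- A Hankel matrix: the `(i,j)` entry depends only on `i + j`. -/
def IsHankelMat {n : ℕ} (A : Matrix (Fin n) (Fin n) ℝ) : Prop :=
  ∀ i j k l : Fin n, (i : ℕ) + (j : ℕ) = (k : ℕ) + (l : ℕ) → A i j = A k l

/-- A totally non-negative matrix: every minor is non-negative. -/
def TotallyNonneg {m n : ℕ} (A : Matrix (Fin m) (Fin n) ℝ) : Prop :=
  ∀ (k : ℕ) (r : Fin k → Fin m) (c : Fin k → Fin n),
    StrictMono r → StrictMono c → 0 ≤ (A.submatrix r c).det

lemma hk_sv_lt (P : Polynomial ℝ) (hP : P ≠ 0) : P.signVariations < P.support.card := by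
  generalize hk : P.support.card = k
  induction k generalizing P with
  | zero => simp_all
  | succ k ih =>
    have h1 := P.signVariations_le_eraseLead_succ
    have h2 := Polynomial.card_support_eraseLead' hk
    by_cases h : P.eraseLead = 0
    · rw [h] at h1
      have h3 : P = Polynomial.monomial P.natDegree P.leadingCoeff := by
        have := P.eraseLead_add_monomial_natDegree_leadingCoeff
        rw [h, zero_add] at this
        exact this.symm
      rw [h3, Polynomial.signVariations_monomial]
      omega
    · have := ih _ h h2
      omega

lemma hk_roots {p : ℕ} (P : Polynomial ℝ) (hP : P.support.card ≤ p) (x : Fin p → ℝ)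
    (hx : ∀ i, 0 < x i) (hinj : Function.Injective x) (h0 : ∀ i, P.eval (x i) = 0) : P = 0 := by
  by_contra hne
  have h1 := hk_sv_lt P hne
  have h2 := P.roots_countP_pos_le_signVariations
  have h3 : (Finset.univ.map ⟨x, hinj⟩).val ≤ P.roots.filter (fun y => 0 < y) := by
    rw [Multiset.le_iff_subset (Finset.nodup _)]
    intro y hy
    simp at hy
    obtain ⟨i, rfl⟩ := hy
    simp [hx, hne, h0]
  have h4 := Multiset.card_le_card h3
  rw [Multiset.countP_eq_card_filter] at h2
  simp at h4
  omega

lemma hk_vander (p : ℕ) : ∀ (x : Fin p → ℝ) (r : Fin p → ℕ), (∀ i, 0 < x i) → StrictMono x →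
    StrictMono r → 0 < (Matrix.of fun i j => x i ^ r j).det := by
  induction p with
  | zero => intro x r _ _ _; simp
  | succ p ih =>
    intro x r hx hm hr
    let cf : Fin (p+1) → ℝ := fun j => (-1) ^ (p + (j:ℕ)) *
      (Matrix.of fun (i : Fin p) (k : Fin p) => x i.castSucc ^ r (j.succAbove k)).det
    let P : Polynomial ℝ := ∑ j, Polynomial.monomial (r j) (cf j)
    have hev : ∀ t : ℝ, P.eval t =
        (Matrix.of fun i j => (Fin.snoc (fun i : Fin p => x i.castSucc) t : Fin (p+1) → ℝ) i ^ r j).det := by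
      intro t
      rw [Matrix.det_succ_row _ (Fin.last p)]
      simp only [P, Polynomial.eval_finsetSum, Polynomial.eval_monomial]
      refine Finset.sum_congr rfl fun j _ => ?_
      simp only [cf, Matrix.of_apply, Fin.snoc_last, Fin.val_last]
      rw [mul_right_comm]
      congr 2
      ext i k
      simp
    have hco : ∀ j, P.coeff (r j) = cf j := by
      intro j
      simp only [P, Polynomial.finsetSum_coeff, Polynomial.coeff_monomial]
      simp [hr.injective.eq_iff]
    have hsup : P.support ⊆ Finset.univ.image r := by
      intro m hm
      by_contra hc
      simp at hc
      simp [P, Polynomial.coeff_monomial, hc] at hm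
    have hcard : P.support.card ≤ p + 1 := by
      refine (Finset.card_le_card hsup).trans (Finset.card_image_le.trans (by simp))
    have hlast : 0 < cf (Fin.last p) := by
      have := ih (fun i => x i.castSucc) (fun k => r k.castSucc) (fun i => hx _)
        (hm.comp (Fin.strictMono_castSucc)) (hr.comp (Fin.strictMono_castSucc))
      simp only [cf, Fin.val_last, Fin.succAbove_last]
      rw [← two_mul, pow_mul]; simpa using this
    have hP0 : P ≠ 0 := by
      intro h
      have := hco (Fin.last p)
      rw [h] at this; simp at this; linarith
    have hnr : ∀ t, 0 < t → (∀ i : Fin p, x i.castSucc < t) → P.eval t ≠ 0 := by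
      intro t ht0 ht h
      apply hP0
      have hsm : StrictMono (Fin.snoc (fun i : Fin p => x i.castSucc) t : Fin (p+1) → ℝ) := by
        intro a b hab
        induction b using Fin.lastCases with
        | last =>
          induction a using Fin.lastCases with
          | last => simp at hab
          | cast a => simpa using ht a
        | cast b =>
          induction a using Fin.lastCases with
          | last => exact absurd hab (not_lt.2 (Fin.le_last _))
          | cast a => simpa using hm hab
      refine hk_roots P hcard _ ?_ hsm.injective ?_
      · intro i
        induction i using Fin.lastCases with
        | last => simpa using ht0
        | cast i => simpa using hx _
      · intro i
        induction i using Fin.lastCases with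
        | last => simpa using h
        | cast i =>
          simp only [Fin.snoc_castSucc]
          rw [hev]
          refine Matrix.det_zero_of_row_eq (i := i.castSucc) (j := Fin.last p)
            (Fin.castSucc_lt_last i).ne ?_
          ext k
          simp
    have hxe : (Fin.snoc (fun i : Fin p => x i.castSucc) (x (Fin.last p)) : Fin (p+1) → ℝ) = x := by
      ext i
      induction i using Fin.lastCases with
      | last => simp
      | cast i => simp
    have hfin := hev (x (Fin.last p))
    rw [hxe] at hfin
    rw [← hfin]
    have hdeg : P.natDegree = r (Fin.last p) := by
      apply le_antisymm
      · rw [Polynomial.natDegree_le_iff_coeff_eq_zero]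
        intro N hN
        by_contra hc
        have := hsup (Polynomial.mem_support_iff.2 hc)
        simp at this
        obtain ⟨a, rfl⟩ := this
        exact absurd hN (not_lt.2 (hr.monotone (Fin.le_last a)))
      · exact Polynomial.le_natDegree_of_ne_zero (by rw [hco]; exact hlast.ne')
    by_contra hneg
    push Not at hneg
    have hlc : 0 < P.leadingCoeff := by rw [Polynomial.leadingCoeff, hdeg, hco]; exact hlast
    by_cases hd : P.natDegree = 0
    · rw [Polynomial.eq_C_of_natDegree_eq_zero hd] at hneg
      rw [Polynomial.leadingCoeff, hd] at hlc
      simp at hneg; linarith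
    · have ht := P.tendsto_atTop_of_leadingCoeff_nonneg
        (Polynomial.natDegree_pos_iff_degree_pos.1 (Nat.pos_of_ne_zero hd)) hlc.le
      obtain ⟨y, hy1, hy2⟩ := ((ht.eventually_gt_atTop 0).and
        (eventually_ge_atTop (x (Fin.last p)))).exists
      have := intermediate_value_Icc hy2 (P.continuous.continuousOn)
      obtain ⟨z, hz, hz0⟩ := this ⟨hneg, hy1.le⟩
      exact hnr z ((hx _).trans_le hz.1)
        (fun i => (hm (Fin.castSucc_lt_last i)).trans_le hz.1) hz0

lemma hk_vander_mul {p : ℕ} (x : Fin p → ℝ) (r c : Fin p → ℕ) (hx : ∀ i, 0 < x i)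
    (hr : StrictMono r) (hc : StrictMono c) :
    0 ≤ (Matrix.of fun i j => x i ^ r j).det * (Matrix.of fun i j => x i ^ c j).det := by
  by_cases hinj : Function.Injective x
  · set σ := Tuple.sort x
    have hs : StrictMono (x ∘ σ) := (Tuple.monotone_sort x).strictMono_of_injective
      (hinj.comp σ.injective)
    have h1 := hk_vander p (x ∘ σ) r (fun i => hx _) hs hr
    have h2 := hk_vander p (x ∘ σ) c (fun i => hx _) hs hc
    have e : ∀ r : Fin p → ℕ, (Matrix.of fun i j => (x ∘ σ) i ^ r j).det =
        (Equiv.Perm.sign σ : ℤ) * (Matrix.of fun i j => x i ^ r j).det := by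
      intro r
      rw [← Matrix.det_permute]; rfl
    rw [e] at h1 h2
    have h3 := mul_pos h1 h2
    have h4 : (((Equiv.Perm.sign σ : ℤˣ) : ℤ) : ℝ) * ((Equiv.Perm.sign σ : ℤˣ) : ℤ) = 1 := by
      rw [← Int.cast_mul, ← Units.val_mul, Int.units_mul_self]; simp
    have h5 : ∀ a s b : ℝ, s * s = 1 → s * a * (s * b) = a * b := by
      intro a s b h; linear_combination a * b * h
    rw [h5 _ _ _ h4] at h3
    exact h3.le
  · rw [Function.not_injective_iff] at hinj
    obtain ⟨a, b, hab, hne⟩ := hinj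
    rw [Matrix.det_zero_of_row_eq hne (by ext k; simp [hab]), zero_mul]

lemma hk_det_sum {p : ℕ} {ι : Type*} [Fintype ι] [DecidableEq ι] (M N : ι → Fin p → ℝ) :
    (Matrix.of fun i j : Fin p => ∑ k, M k i * N k j).det =
      ∑ f : Fin p → ι, (∏ i, M (f i) i) * (Matrix.of fun i j : Fin p => N (f i) j).det := by
  have : (Matrix.of fun i j : Fin p => ∑ k, M k i * N k j) =
      fun i => ∑ k, M k i • N k := by
    ext i j; simp
  rw [this]
  change Matrix.detRowAlternating.toMultilinearMap _ = _
  rw [MultilinearMap.map_sum]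
  refine Finset.sum_congr rfl fun f _ => ?_
  rw [MultilinearMap.map_smul_univ]
  rfl

lemma hk_det_sum2 {p : ℕ} {ι : Type*} [Fintype ι] [DecidableEq ι] (M N : ι → Fin p → ℝ) :
    (Nat.factorial p : ℝ) * (Matrix.of fun i j : Fin p => ∑ k, M k i * N k j).det =
      ∑ f : Fin p → ι, (Matrix.of fun i j : Fin p => M (f i) j).det
        * (Matrix.of fun i j : Fin p => N (f i) j).det := by
  have h : ∀ σ : Equiv.Perm (Fin p), (Matrix.of fun i j : Fin p => ∑ k, M k i * N k j).det =
      ∑ f : Fin p → ι, ((Equiv.Perm.sign σ : ℤ) * ∏ i, M (f (σ i)) i) *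
        (Matrix.of fun i j : Fin p => N (f i) j).det := by
    intro σ
    rw [hk_det_sum]
    rw [← (Equiv.arrowCongr σ (Equiv.refl ι)).symm.sum_comp]
    refine Finset.sum_congr rfl fun f _ => ?_
    have : (Matrix.of fun i j : Fin p => N (f (σ i)) j).det = (Equiv.Perm.sign σ : ℤ) *
        (Matrix.of fun i j : Fin p => N (f i) j).det := by
      rw [← Matrix.det_permute]; rfl
    simp only [Equiv.arrowCongr_symm, Equiv.arrowCongr_apply, Equiv.symm_symm, Equiv.refl_symm,
      Equiv.coe_refl, Function.comp_apply, id]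
    rw [this]; ring
  have h2 : ∑ σ : Equiv.Perm (Fin p), (Matrix.of fun i j : Fin p => ∑ k, M k i * N k j).det =
      (Nat.factorial p : ℝ) * (Matrix.of fun i j : Fin p => ∑ k, M k i * N k j).det := by
    simp [Fintype.card_perm]
  rw [← h2, Finset.sum_congr rfl fun σ _ => h σ, Finset.sum_comm]
  refine Finset.sum_congr rfl fun f _ => ?_
  rw [← Finset.sum_mul, Matrix.det_apply' (Matrix.of fun i j : Fin p => M (f i) j)]
  simp

lemma hk_moment_det {p : ℕ} {ι : Type*} [Fintype ι] (m l : ι → ℝ) (hm : ∀ k, 0 ≤ m k)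
    (hl : ∀ k, 0 < l k) (r c : Fin p → ℕ) (hr : StrictMono r) (hc : StrictMono c) :
    0 ≤ (Matrix.of fun i j : Fin p => ∑ k, m k * l k ^ (r i + c j)).det := by
  classical
  have h := hk_det_sum2 (fun k (i : Fin p) => m k * l k ^ r i) (fun k (j : Fin p) => l k ^ c j)
  have e : (Matrix.of fun i j : Fin p => ∑ k, m k * l k ^ (r i + c j)) =
     (Matrix.of fun i j : Fin p => ∑ k, m k * l k ^ r i * l k ^ c j) := by
    ext i j; simp [pow_add, mul_assoc]
  rw [e]
  have h2 : 0 ≤ (Nat.factorial p : ℝ) * (Matrix.of fun i j : Fin p => ∑ k, m k * l k ^ r i * l k ^ c j).det := by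
    rw [h]
    refine Finset.sum_nonneg fun f _ => ?_
    have : (Matrix.of fun i j : Fin p => m (f i) * l (f i) ^ r j).det =
        (∏ i, m (f i)) * (Matrix.of fun i j : Fin p => l (f i) ^ r j).det := by
      rw [← Matrix.det_mul_column]; rfl
    rw [this, mul_assoc]
    exact mul_nonneg (Finset.prod_nonneg fun i _ => hm _)
      (hk_vander_mul (fun i => l (f i)) r c (fun i => hl _) hr hc)
  exact nonneg_of_mul_nonneg_right h2 (by positivity)

/-- Nonnegativity of principal minors. -/
def HkPM {n : ℕ} (A : Matrix (Fin n) (Fin n) ℝ) : Prop :=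
  ∀ (k : ℕ) (r : Fin k → Fin n), StrictMono r → 0 ≤ (A.submatrix r r).det

lemma hk_det_diag_insert {n : ℕ} (A : Matrix (Fin (n+1)) (Fin (n+1)) ℝ) (d : Fin (n+1) → ℝ)
    (i : Fin (n+1)) (hi : d i = 0) (t : ℝ) :
    (A + Matrix.diagonal (Function.update d i t)).det = (A + Matrix.diagonal d).det +
      t * (A.submatrix i.succAbove i.succAbove + Matrix.diagonal (d ∘ i.succAbove)).det := by
  have h1 : A + Matrix.diagonal (Function.update d i t) =
      (A + Matrix.diagonal d).updateRow i ((A + Matrix.diagonal d) i + t • Pi.single i (1:ℝ)) := by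
    ext a b
    by_cases ha : a = i
    · subst ha
      by_cases hb : b = a
      · subst hb; simp [hi]
      · simp [Matrix.diagonal_apply_ne' _ hb, hb]
    · simp [Matrix.diagonal_apply, ha]
  have h2 : A.submatrix i.succAbove i.succAbove + Matrix.diagonal (d ∘ i.succAbove) =
      (A + Matrix.diagonal d).submatrix i.succAbove i.succAbove := by
    ext a b
    simp [Matrix.diagonal_apply]
  rw [h1, Matrix.det_updateRow_add, Matrix.det_updateRow_smul, ← Matrix.adjugate_apply,
    Matrix.adjugate_fin_succ_eq_det_submatrix, h2, ← two_mul, pow_mul]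
  simp [Matrix.updateRow_eq_self]

lemma hk_pm_det {n : ℕ} : ∀ (A : Matrix (Fin n) (Fin n) ℝ), HkPM A → ∀ d : Fin n → ℝ,
    (∀ i, 0 ≤ d i) → 0 ≤ (A + Matrix.diagonal d).det ∧
      ((∀ i, 0 < d i) → 0 < (A + Matrix.diagonal d).det) := by
  induction n with
  | zero => intro A _ d _; simp
  | succ n ih =>
    intro A hA d hd
    have hsub : ∀ i : Fin (n+1), HkPM (A.submatrix i.succAbove i.succAbove) := by
      intro i k r hr
      exact hA k (i.succAbove ∘ r) ((Fin.strictMono_succAbove i).comp hr)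
    have key : ∀ S : Finset (Fin (n+1)), ∀ d : Fin (n+1) → ℝ, (∀ i, 0 ≤ d i) →
        (∀ i ∉ S, d i = 0) → 0 ≤ (A + Matrix.diagonal d).det := by
      intro S
      induction S using Finset.induction_on with
      | empty =>
        intro d _ h0
        have : d = 0 := by ext i; exact h0 i (by simp)
        rw [this]
        simpa using hA (n+1) id strictMono_id
      | insert i S hiS ihS =>
        intro d hd h0
        have e : d = Function.update (Function.update d i 0) i (d i) := by simp
        rw [e, hk_det_diag_insert _ _ _ (by simp)]
        have hd' : ∀ j, 0 ≤ Function.update d i 0 j := by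
          intro j
          by_cases h : j = i
          · subst h; simp
          · simp [h, hd j]
        refine add_nonneg (ihS _ hd' ?_) (mul_nonneg (hd i) (ih _ (hsub i) _ fun j => hd' _).1)
        intro j hj
        by_cases h : j = i
        · subst h; simp
        · simp [h, h0 j (by simp [h, hj])]
    refine ⟨key Finset.univ d hd (by simp), fun hp => ?_⟩
    have e : d = Function.update (Function.update d 0 0) 0 (d 0) := by simp
    rw [e, hk_det_diag_insert _ _ _ (by simp)]
    have hd' : ∀ j, 0 ≤ Function.update d 0 0 j := by
      intro j
      by_cases h : j = 0
      · subst h; simp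
      · simp [h, hd j]
    refine add_pos_of_nonneg_of_pos (key Finset.univ _ hd' (by simp)) (mul_pos (hp 0)
      ((ih _ (hsub 0) _ fun j => hd' _).2 fun j => ?_))
    simp [hp]

lemma hk_pm_psd {n : ℕ} (A : Matrix (Fin n) (Fin n) ℝ) (hs : A.IsHermitian) (hA : HkPM A) :
    A.PosSemidef := by
  rw [hs.posSemidef_iff_eigenvalues_nonneg]
  intro i
  by_contra hneg
  simp only [Pi.zero_apply, not_le] at hneg
  have h1 := (hk_pm_det A hA (fun _ => - hs.eigenvalues i) (fun _ => by linarith)).2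
    (fun _ => by linarith)
  have h2 := hs.mulVec_eigenvectorBasis i
  have h3 : (A + Matrix.diagonal (fun _ => - hs.eigenvalues i)).det = 0 := by
    rw [← Matrix.exists_mulVec_eq_zero_iff]
    refine ⟨hs.eigenvectorBasis i, ?_, ?_⟩
    · intro h
      have := hs.eigenvectorBasis.orthonormal.ne_zero i
      apply this
      ext j
      exact congrFun h j
    · rw [Matrix.add_mulVec, h2]
      ext j
      simp
  linarith

lemma hk_hankel_symm {n : ℕ} {A : Matrix (Fin n) (Fin n) ℝ} (h : IsHankelMat A) :
    A.IsHermitian := by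
  ext i j
  simp [h j i i j (add_comm _ _)]

lemma hk_tn_psd {n : ℕ} {A : Matrix (Fin n) (Fin n) ℝ} (h : IsHankelMat A)
    (hA : TotallyNonneg A) : A.PosSemidef :=
  hk_pm_psd A (hk_hankel_symm h) (fun k r hr => hA k r r hr hr)

lemma hk_tn_limit {n : ℕ} {α : Type*} {l : Filter α} [l.NeBot]
    (B : α → Matrix (Fin n) (Fin n) ℝ) (A : Matrix (Fin n) (Fin n) ℝ)
    (hB : ∀ᶠ a in l, TotallyNonneg (B a))
    (ht : ∀ i j, Tendsto (fun a => B a i j) l (nhds (A i j))) : TotallyNonneg A := by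
  intro k r c hr hc
  have hcont : Continuous fun M : Matrix (Fin n) (Fin n) ℝ => (M.submatrix r c).det :=
    (continuous_id.matrix_submatrix r c).matrix_det
  have h1 : Tendsto B l (nhds A) :=
    tendsto_pi_nhds.2 fun i => tendsto_pi_nhds.2 fun j => ht i j
  have h2 := (hcont.tendsto A).comp h1
  exact ge_of_tendsto h2 (hB.mono fun a ha => ha k r c hr hc)

/-- Matrices of moments of finitely supported measures on the half line. -/
def HkM {n : ℕ} (A : Matrix (Fin n) (Fin n) ℝ) : Prop :=
  ∃ (ι : Type) (_ : Fintype ι) (m l : ι → ℝ), (∀ k, 0 ≤ m k) ∧ (∀ k, 0 ≤ l k) ∧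
    ∀ i j, A i j = ∑ k, m k * l k ^ ((i : ℕ) + (j : ℕ))

lemma HkM.tn {n : ℕ} {A : Matrix (Fin n) (Fin n) ℝ} (h : HkM A) : TotallyNonneg A := by
  obtain ⟨ι, _, m, l, hm, hl, he⟩ := h
  refine hk_tn_limit (l := nhdsWithin (0:ℝ) (Set.Ioi 0))
    (fun ε => Matrix.of fun i j => ∑ k, m k * (l k + ε) ^ ((i : ℕ) + (j : ℕ))) A ?_ ?_
  · filter_upwards [self_mem_nhdsWithin] with ε hε
    intro k r c hr hc
    exact hk_moment_det m (fun k => l k + ε) hm (fun k => add_pos_of_nonneg_of_pos (hl k) hε)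
      (fun i => (r i : ℕ)) (fun i => (c i : ℕ)) (fun a b h => hr h) (fun a b h => hc h)
  · intro i j
    rw [he]
    have : Continuous fun ε : ℝ => ∑ k, m k * (l k + ε) ^ ((i : ℕ) + (j : ℕ)) := by fun_prop
    have h := this.tendsto 0
    simp only [add_zero] at h
    exact h.mono_left nhdsWithin_le_nhds

lemma HkM.add {n : ℕ} {A B : Matrix (Fin n) (Fin n) ℝ} (h : HkM A) (h' : HkM B) :
    HkM (A + B) := by
  obtain ⟨ι, _, m, l, hm, hl, he⟩ := h
  obtain ⟨κ, _, m', l', hm', hl', he'⟩ := h'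
  refine ⟨ι ⊕ κ, inferInstance, Sum.elim m m', Sum.elim l l', ?_, ?_, ?_⟩
  · rintro (k | k) <;> simp [hm, hm']
  · rintro (k | k) <;> simp [hl, hl']
  · intro i j; simp [he, he']

lemma HkM.mul {n : ℕ} {A B : Matrix (Fin n) (Fin n) ℝ} (h : HkM A) (h' : HkM B) :
    HkM (Matrix.of fun i j => A i j * B i j) := by
  obtain ⟨ι, _, m, l, hm, hl, he⟩ := h
  obtain ⟨κ, _, m', l', hm', hl', he'⟩ := h'
  refine ⟨ι × κ, inferInstance, fun k => m k.1 * m' k.2, fun k => l k.1 * l' k.2,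
    fun k => mul_nonneg (hm _) (hm' _), fun k => mul_nonneg (hl _) (hl' _), ?_⟩
  intro i j
  simp only [Matrix.of_apply, he, he', Finset.sum_mul_sum, Fintype.sum_prod_type, mul_pow]
  refine Finset.sum_congr rfl fun a _ => Finset.sum_congr rfl fun b _ => by ring

lemma HkM.single {n : ℕ} (a u : ℝ) (ha : 0 ≤ a) (hu : 0 ≤ u) :
    HkM (Matrix.of fun i j : Fin n => a * u ^ ((i:ℕ) + (j:ℕ))) :=
  ⟨Unit, inferInstance, fun _ => a, fun _ => u, fun _ => ha, fun _ => hu, fun i j => by simp⟩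

lemma HkM.const {n : ℕ} (a : ℝ) (ha : 0 ≤ a) : HkM (Matrix.of fun _ _ : Fin n => a) := by
  simpa using HkM.single (n := n) a 1 ha zero_le_one

lemma HkM.poly {n : ℕ} {A : Matrix (Fin n) (Fin n) ℝ} (h : HkM A) (c : ℕ → ℝ)
    (hc : ∀ k, 0 ≤ c k) (N : ℕ) :
    HkM (Matrix.of fun i j => ∑ k ∈ Finset.range N, c k * A i j ^ k) := by
  have hp : ∀ k, HkM (Matrix.of fun i j => A i j ^ k) := by
    intro k
    induction k with
    | zero => simpa using HkM.const (n := n) 1 zero_le_one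
    | succ k ih => simpa [pow_succ] using ih.mul h
  induction N with
  | zero => simpa using HkM.const (n := n) 0 le_rfl
  | succ N ih =>
    have := ih.add ((HkM.const (n := n) (c N) (hc N)).mul (hp N))
    simp only [Finset.sum_range_succ]
    exact this

lemma hk_degenerate (n : ℕ) (p α β : ℝ) (hp : 0 ≤ p) (hα : 0 ≤ α) (hβ : 0 ≤ β) :
    TotallyNonneg (Matrix.of fun i j : Fin n => p + α * 0 ^ ((i:ℕ) + (j:ℕ)) +
      β * 0 ^ ((n - 1 - (i:ℕ)) + (n - 1 - (j:ℕ)))) := by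
  refine hk_tn_limit (l := nhdsWithin (0:ℝ) (Set.Ioi 0))
    (fun ε => Matrix.of fun i j => p + α * 0 ^ ((i:ℕ) + (j:ℕ)) +
      β * ε ^ ((n - 1 - (i:ℕ)) + (n - 1 - (j:ℕ)))) _ ?_ ?_
  · filter_upwards [self_mem_nhdsWithin] with ε hε
    have hε : 0 < ε := hε
    have h := ((HkM.const (n := n) p hp).add (HkM.single (n := n) α 0 hα le_rfl)).add
      (HkM.single (n := n) (β * ε ^ (2 * (n - 1))) (ε⁻¹) (by positivity) (by positivity))
    convert h.tn using 1
    ext i j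
    simp only [Matrix.of_apply, Matrix.add_apply]
    congr 1
    rw [mul_assoc]
    congr 1
    have e : 2 * (n - 1) = ((n - 1 - (i:ℕ)) + (n - 1 - (j:ℕ))) + ((i:ℕ) + (j:ℕ)) := by omega
    rw [e, pow_add ε ((n - 1 - (i:ℕ)) + (n - 1 - (j:ℕ))), inv_pow, mul_assoc, mul_inv_cancel₀ (by positivity), mul_one]
  · intro i j
    have : Continuous fun ε : ℝ => p + α * 0 ^ ((i:ℕ) + (j:ℕ)) +
      β * ε ^ ((n - 1 - (i:ℕ)) + (n - 1 - (j:ℕ))) := by fun_prop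
    exact (this.tendsto 0).mono_left nhdsWithin_le_nhds

/-- Hankel matrix of a sequence, shifted by `e`. -/
def hkH (s : ℕ → ℝ) (n e : ℕ) : Matrix (Fin n) (Fin n) ℝ :=
  Matrix.of fun i j => s ((i:ℕ) + (j:ℕ) + e)

open scoped MatrixOrder in
lemma hk_simdiag {n : ℕ} (A B : Matrix (Fin n) (Fin n) ℝ) (hA : A.PosDef) (hB : B.PosSemidef) :
    ∃ (P : Matrix (Fin n) (Fin n) ℝ) (l : Fin n → ℝ), IsUnit P ∧ (∀ k, 0 ≤ l k) ∧
      A = P.transpose * P ∧ B = P.transpose * Matrix.diagonal l * P := by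
  obtain ⟨Q, hQ⟩ := CStarAlgebra.nonneg_iff_eq_star_mul_self.mp hA.posSemidef.nonneg
  have hQu : IsUnit Q := by
    have := hA.isUnit
    rw [hQ] at this
    rw [Matrix.isUnit_iff_isUnit_det] at this ⊢
    rw [Matrix.det_mul] at this
    exact isUnit_of_mul_isUnit_right this
  have hQd := (Matrix.isUnit_iff_isUnit_det _).1 hQu
  have hC : ((Q⁻¹).conjTranspose * B * Q⁻¹).PosSemidef := hB.conjTranspose_mul_mul_same _
  set C := (Q⁻¹).conjTranspose * B * Q⁻¹ with hCdef
  have hsp := hC.1.spectral_theorem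
  rw [Unitary.conjStarAlgAut_apply] at hsp
  set U : Matrix (Fin n) (Fin n) ℝ := (hC.1.eigenvectorUnitary : Matrix (Fin n) (Fin n) ℝ) with hU
  have hU1 : U * star U = 1 := Unitary.coe_mul_star_self hC.1.eigenvectorUnitary
  have hU2 : star U * U = 1 := Unitary.coe_star_mul_self hC.1.eigenvectorUnitary
  have hst : ∀ M : Matrix (Fin n) (Fin n) ℝ, star M = M.transpose := by
    intro M; ext i j; simp [Matrix.star_apply]
  have hct : ∀ M : Matrix (Fin n) (Fin n) ℝ, M.conjTranspose = M.transpose := by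
    intro M; ext i j; simp
  refine ⟨star U * Q, hC.1.eigenvalues, ?_, hC.eigenvalues_nonneg, ?_, ?_⟩
  · exact (IsUnit.of_mul_eq_one _ hU2).mul hQu
  · rw [← hst, star_mul, star_star, mul_assoc, ← mul_assoc U, hU1, one_mul]
    exact hQ
  · rw [← hst, star_mul, star_star]
    have e1 : B = star Q * C * Q := by
      rw [hCdef, hct, hst, ← mul_assoc, ← mul_assoc, ← Matrix.transpose_mul,
        Matrix.nonsing_inv_mul _ hQd, Matrix.transpose_one, one_mul, mul_assoc,
        Matrix.nonsing_inv_mul _ hQd, mul_one]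
    calc B = star Q * C * Q := e1
      _ = star Q * (U * Matrix.diagonal hC.1.eigenvalues * star U) * Q := by
        conv_lhs => rw [hsp]
        rfl
      _ = _ := by simp only [mul_assoc]

lemma hk_rep0 {m : ℕ} (s : ℕ → ℝ) (hA : (hkH s (m+1) 0).PosDef)
    (hB : (hkH s (m+1) 1).PosSemidef) : HkM (hkH s (m+1) 0) := by
  obtain ⟨P, l, hP, hl, h1, h2⟩ := hk_simdiag _ _ hA hB
  have hstep : ∀ (j : ℕ) (hj : j + 1 < m + 1) (k : Fin (m+1)),
      P k ⟨j+1, hj⟩ = l k * P k ⟨j, by omega⟩ := by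
    intro j hj k
    have h3 : P.transpose.mulVec (fun k => P k ⟨j+1, hj⟩) =
        P.transpose.mulVec (fun k => l k * P k ⟨j, by omega⟩) := by
      ext i
      have e1 : hkH s (m+1) 0 i ⟨j+1, hj⟩ = hkH s (m+1) 1 i ⟨j, by omega⟩ := by
        simp [hkH, add_assoc]
      rw [h1, h2, mul_assoc, Matrix.mul_apply, Matrix.mul_apply] at e1
      simpa [Matrix.mulVec, dotProduct, Matrix.diagonal_mul] using e1
    have hinj := Matrix.mulVec_injective_of_isUnit ((Matrix.isUnit_transpose P).2 hP)
    exact congrFun (hinj h3) k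
  have hpow : ∀ (j : ℕ) (hj : j < m + 1) (k : Fin (m+1)), P k ⟨j, hj⟩ = P k 0 * l k ^ j := by
    intro j
    induction j with
    | zero => intro hj k; simp
    | succ j ih => intro hj k; rw [hstep, ih]; ring
  refine ⟨Fin (m+1), inferInstance, fun k => P k 0 ^ 2, l, fun k => sq_nonneg _, hl, ?_⟩
  intro i j
  rw [h1, Matrix.mul_apply]
  refine Finset.sum_congr rfl fun k _ => ?_
  rw [Matrix.transpose_apply, hpow i i.2 k, hpow j j.2 k]; ring

lemma hk_rep {m : ℕ} (s : ℕ → ℝ) (hA : (hkH s (m+1) 0).PosDef)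
    (hB : (hkH s m 1).PosDef) : HkM (hkH s (m+1) 0) := by
  have hBu := (Matrix.isUnit_iff_isUnit_det _).1 hB.isUnit
  let b : Matrix (Fin m) (Fin 1) ℝ := Matrix.of fun i _ => s ((i:ℕ) + m + 1)
  let D := b.conjTranspose * (hkH s m 1)⁻¹ * b
  let s' : ℕ → ℝ := fun k => if k = 2 * m + 1 then D 0 0 else s k
  have e0 : hkH s' (m+1) 0 = hkH s (m+1) 0 := by
    ext i j
    have : (i:ℕ) + (j:ℕ) ≠ 2 * m + 1 := by omega
    simp [hkH, s', this]
  have e1 : (hkH s' (m+1) 1).submatrix finSumFinEquiv finSumFinEquiv =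
      Matrix.fromBlocks (hkH s m 1) b b.conjTranspose D := by
    ext i j
    rcases i with i | i <;> rcases j with j | j
    · have : (i:ℕ) + (j:ℕ) ≠ 2 * m := by omega
      simp [hkH, s', this]
    · have : (i:ℕ) + m ≠ 2 * m := by omega
      simp [hkH, s', b, this]
    · have : (j:ℕ) + m ≠ 2 * m := by omega
      simp [hkH, s', b, this, add_comm m]
    · have hi : i = 0 := Subsingleton.elim _ _
      have hj : j = 0 := Subsingleton.elim _ _
      subst hi hj
      simp [hkH, s', two_mul]
  have hpsd : (hkH s' (m+1) 1).PosSemidef := by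
    let _ := hB.isUnit.invertible
    have h := (Matrix.PosDef.fromBlocks₁₁ b D hB).2 (by
      rw [show D = b.conjTranspose * (hkH s m 1)⁻¹ * b from rfl, sub_self]
      exact Matrix.PosSemidef.zero)
    rw [← e1] at h
    have h2 := h.submatrix finSumFinEquiv.symm
    simpa using h2
  have := hk_rep0 s' (by rwa [e0]) hpsd
  rwa [e0] at this

lemma hk_quad {n : ℕ} (A : Matrix (Fin n) (Fin n) ℝ) (v : Fin n → ℝ) :
    star v ⬝ᵥ (A.mulVec v) = ∑ i, ∑ j, v i * v j * A i j := by
  simp only [dotProduct, Matrix.mulVec, Finset.mul_sum, Pi.star_apply, star_trivial]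
  refine Finset.sum_congr rfl fun i _ => Finset.sum_congr rfl fun j _ => by ring

lemma hk_sumsq {n : ℕ} (v : Fin n → ℝ) (x : ℝ) (e : ℕ) :
    ∑ i, ∑ j, v i * v j * x ^ ((i:ℕ) + (j:ℕ) + e) = x ^ e * (∑ i, v i * x ^ (i:ℕ)) ^ 2 := by
  rw [sq, Finset.sum_mul_sum, Finset.mul_sum]
  refine Finset.sum_congr rfl fun i _ => ?_
  rw [Finset.mul_sum]
  refine Finset.sum_congr rfl fun j _ => by ring

lemma hk_pd0 (n N e : ℕ) (h : n ≤ N) :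
    (hkH (fun k => ∑ a ∈ Finset.range N, ((a:ℝ) + 1) ^ k) n e).PosDef := by
  refine Matrix.PosDef.of_dotProduct_mulVec_pos ?_ ?_
  · ext i j; simp [hkH, add_comm (i:ℕ)]
  · intro v hv
    rw [hk_quad]
    have e1 : ∑ i, ∑ j, v i * v j * hkH (fun k => ∑ a ∈ Finset.range N, ((a:ℝ) + 1) ^ k) n e i j =
        ∑ a ∈ Finset.range N, ((a:ℝ)+1)^e * (∑ i, v i * ((a:ℝ)+1) ^ (i:ℕ)) ^ 2 := by
      simp only [hkH, Matrix.of_apply, Finset.mul_sum, ← hk_sumsq]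
      rw [Finset.sum_comm' (t' := Finset.univ) (s' := fun _ => Finset.range N) (by simp)]
      · refine Finset.sum_congr rfl fun i _ => ?_
        rw [Finset.sum_comm]
    rw [e1]
    have hnn : ∀ a ∈ Finset.range N, 0 ≤ ((a:ℝ)+1)^e * (∑ i, v i * ((a:ℝ)+1) ^ (i:ℕ)) ^ 2 :=
      fun a _ => by positivity
    refine lt_of_le_of_ne (Finset.sum_nonneg hnn) ?_
    intro h0
    rw [eq_comm, Finset.sum_eq_zero_iff_of_nonneg hnn] at h0
    apply hv
    refine Matrix.eq_zero_of_forall_index_sum_mul_pow_eq_zero (f := fun i : Fin n => ((i:ℕ):ℝ) + 1)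
      ?_ ?_
    · intro a b hab; simpa [Fin.ext_iff] using hab
    · intro j
      have := h0 j (by simp; omega)
      have h5 : ((j:ℕ):ℝ) + 1 ≠ 0 := by positivity
      simpa [h5] using this

lemma hk_seq {m : ℕ} {A : Matrix (Fin (m+1)) (Fin (m+1)) ℝ} (h : IsHankelMat A) :
    ∃ s : ℕ → ℝ, A = hkH s (m+1) 0 := by
  refine ⟨fun k => A (Fin.ofNat (m+1) (min k m)) (Fin.ofNat (m+1) (k - m)), ?_⟩
  ext i j
  simp only [hkH, Matrix.of_apply]
  apply h
  have hi := i.2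
  have hj := j.2
  simp only [Fin.val_ofNat]
  rw [Nat.mod_eq_of_lt (by omega), Nat.mod_eq_of_lt (by omega)]
  omega

lemma hk_isHankel (s : ℕ → ℝ) (n e : ℕ) : IsHankelMat (hkH s n e) := by
  intro i j k l h
  simp [hkH, h]

lemma hk_tn_sub {m : ℕ} {s : ℕ → ℝ} (h : TotallyNonneg (hkH s (m+1) 0)) :
    TotallyNonneg (hkH s m 1) := by
  have : hkH s m 1 = (hkH s (m+1) 0).submatrix Fin.castSucc Fin.succ := by
    ext i j; simp [hkH, add_assoc]
  rw [this]
  intro k r c hr hc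
  exact h k _ _ (Fin.strictMono_castSucc.comp hr) ((Fin.strictMono_succ).comp hc)

lemma hk_tn_approx {n : ℕ} {A : Matrix (Fin n) (Fin n) ℝ} (h : IsHankelMat A)
    (hA : TotallyNonneg A) : ∃ B : ℝ → Matrix (Fin n) (Fin n) ℝ, (∀ ε, 0 < ε → HkM (B ε)) ∧
      ∀ i j, Tendsto (fun ε => B ε i j) (nhdsWithin 0 (Set.Ioi 0)) (nhds (A i j)) := by
  rcases n with _ | m
  · exact ⟨fun _ => A, fun ε _ => ⟨Empty, inferInstance, fun _ => 0, fun _ => 0, by simp, by simp,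
      fun i => i.elim0⟩, fun i => i.elim0⟩
  obtain ⟨s, rfl⟩ := hk_seq h
  let s0 : ℕ → ℝ := fun k => ∑ a ∈ Finset.range (m+1), ((a:ℝ) + 1) ^ k
  have hadd : ∀ ε n e, hkH (fun k => s k + ε * s0 k) n e = hkH s n e + ε • hkH s0 n e := by
    intro ε n e; ext i j; simp [hkH]
  refine ⟨fun ε => hkH (fun k => s k + ε * s0 k) (m+1) 0, fun ε hε => ?_, fun i j => ?_⟩
  · apply hk_rep
    · rw [hadd]
      exact Matrix.PosDef.posSemidef_add (hk_tn_psd h hA) ((hk_pd0 (m+1) (m+1) 0 le_rfl).smul hε)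
    · rw [hadd]
      exact Matrix.PosDef.posSemidef_add (hk_tn_psd (hk_isHankel s m 1) (hk_tn_sub hA))
        ((hk_pd0 m (m+1) 1 (by omega)).smul hε)
  · have : Continuous fun ε : ℝ => s ((i:ℕ) + (j:ℕ) + 0) + ε * s0 ((i:ℕ) + (j:ℕ) + 0) := by fun_prop
    have h := this.tendsto 0
    simp only [zero_mul, add_zero] at h
    exact h.mono_left nhdsWithin_le_nhds

lemma hk_ame_cont {G : ℝ → ℝ} (hG : AbsolutelyMonotonicEntire G) : Continuous G := by
  obtain ⟨c, hc, hs⟩ := hG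
  rw [continuous_iff_continuousAt]
  intro x
  have hGe : G = fun x => ∑' n, c n * x ^ n := by ext y; exact (hs y).tsum_eq.symm
  have h : ContinuousOn G (Set.Icc (-(|x|+1)) (|x|+1)) := by
    rw [hGe]
    refine continuousOn_tsum (u := fun n => c n * (|x|+1)^n) (fun n => by fun_prop)
      (hs _).summable ?_
    intro n y hy
    rw [norm_mul, norm_pow, Real.norm_of_nonneg (hc n)]
    have : ‖y‖ ≤ |x| + 1 := abs_le.2 hy
    gcongr
    exact hc n
  exact h.continuousAt (Icc_mem_nhds (by linarith [neg_abs_le x]) (by linarith [le_abs_self x]))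

lemma hk_ame_mono {G : ℝ → ℝ} (hG : AbsolutelyMonotonicEntire G) {x y : ℝ} (hx : 0 ≤ x)
    (hxy : x ≤ y) : G x ≤ G y := by
  obtain ⟨c, hc, hs⟩ := hG
  refine hasSum_le (fun n => ?_) (hs x) (hs y)
  have := hc n
  gcongr

lemma hk_ame_tn {G : ℝ → ℝ} (hG : AbsolutelyMonotonicEntire G) {n : ℕ}
    {A : Matrix (Fin n) (Fin n) ℝ} (h : IsHankelMat A) (hA : TotallyNonneg A) :
    TotallyNonneg (A.map G) := by
  have hcont := hk_ame_cont hG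
  obtain ⟨c, hc, hs⟩ := hG
  obtain ⟨B, hB, hBt⟩ := hk_tn_approx h hA
  refine hk_tn_limit (fun ε => (B ε).map G) _ ?_ (fun i j => (hcont.tendsto _).comp (hBt i j))
  filter_upwards [self_mem_nhdsWithin] with ε hε
  refine hk_tn_limit (l := atTop)
    (fun N => Matrix.of fun i j => ∑ k ∈ Finset.range N, c k * (B ε) i j ^ k) _
    (Eventually.of_forall fun N => ((hB ε hε).poly c hc N).tn) ?_
  intro i j
  exact (hs (B ε i j)).tendsto_sum_nat

lemma hk_tn_nonneg {m n : ℕ} {A : Matrix (Fin m) (Fin n) ℝ} (hA : TotallyNonneg A) (i j) :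
    0 ≤ A i j := by
  simpa using hA 1 (fun _ => i) (fun _ => j) (Subsingleton.strictMono _) (Subsingleton.strictMono _)

lemma hk_logconv {m : ℕ} {s : ℕ → ℝ} (h : TotallyNonneg (hkH s (m+1) 0)) (k : ℕ)
    (hk : k + 2 ≤ 2 * m) : s (k+1) ^ 2 ≤ s k * s (k+2) := by
  obtain ⟨a, b, ha, hb, hab⟩ : ∃ a b, a + 1 < m + 1 ∧ b + 1 < m + 1 ∧ a + b = k :=
    ⟨min k (m-1), k - min k (m-1), by omega, by omega, by omega⟩
  have := h 2 ![⟨a, by omega⟩, ⟨a+1, ha⟩] ![⟨b, by omega⟩, ⟨b+1, hb⟩]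
    (by intro i j hij; fin_cases i <;> fin_cases j <;> simp_all)
    (by intro i j hij; fin_cases i <;> fin_cases j <;> simp_all)
  rw [Matrix.det_fin_two] at this
  simp [hkH] at this
  rw [show a + (b+1) = k+1 by omega, show a+1+b = k+1 by omega, show a + 1 + (b+1) = k+2 by omega,
    hab] at this
  linarith

lemma hk_zero {m : ℕ} {s : ℕ → ℝ} (h : TotallyNonneg (hkH s (m+1) 0)) (k : ℕ) (hk : k ≤ 2 * m)
    (h0 : s k = 0) : ∀ j, 0 < j → j < 2 * m → s j = 0 := by
  have up : ∀ d, k + d < 2 * m → s (k+d) = 0 := by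
    intro d
    induction d with
    | zero => intro _; exact h0
    | succ d ih =>
      intro hd
      have h1 := hk_logconv h (k+d) (by omega)
      rw [ih (by omega), zero_mul] at h1
      exact pow_eq_zero_iff (two_ne_zero) |>.1 (le_antisymm h1 (sq_nonneg _))
  have down : ∀ d, d < k → s (k-d) = 0 := by
    intro d
    induction d with
    | zero => intro _; exact h0
    | succ d ih =>
      intro hd
      have h1 := hk_logconv h (k-(d+2)) (by omega)
      rw [show k - (d+2) + 2 = k - d by omega, ih (by omega), mul_zero,
        show k - (d+2) + 1 = k - (d+1) by omega] at h1
      exact pow_eq_zero_iff (two_ne_zero) |>.1 (le_antisymm h1 (sq_nonneg _))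
  intro j hj1 hj2
  rcases le_total k j with hkj | hkj
  · simpa [hkj] using up (j - k) (by omega)
  · have := down (k - j) (by omega)
    rwa [show k - (k - j) = j by omega] at this

lemma hk_four_le {F G : ℝ → ℝ} (hG : AbsolutelyMonotonicEntire G)
    (hFG : ∀ x ∈ Set.Ioi (0 : ℝ), F x = G x)
    (hL : ∃ L : ℝ, Tendsto F (nhdsWithin 0 (Set.Ioi 0)) (nhds L) ∧ F 0 ≤ L) (x : ℝ) (hx : 0 ≤ x) :
    F 0 ≤ F x := by
  rcases hx.eq_or_lt with rfl | hx
  · exact le_rfl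
  obtain ⟨L, hL, hle⟩ := hL
  have h1 : Tendsto F (nhdsWithin 0 (Set.Ioi 0)) (nhds (G 0)) := by
    refine (((hk_ame_cont hG).tendsto 0).mono_left nhdsWithin_le_nhds).congr' ?_
    filter_upwards [self_mem_nhdsWithin] with y hy
    exact (hFG y hy).symm
  rw [tendsto_nhds_unique hL h1] at hle
  rw [hFG x hx]
  exact hle.trans (hk_ame_mono hG le_rfl hx.le)

lemma hk_four_two {F G : ℝ → ℝ} (hG : AbsolutelyMonotonicEntire G)
    (hFG : ∀ x ∈ Set.Ioi (0 : ℝ), F x = G x) (hF0 : 0 ≤ F 0)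
    (hL : ∃ L : ℝ, Tendsto F (nhdsWithin 0 (Set.Ioi 0)) (nhds L) ∧ F 0 ≤ L)
    (n : ℕ) (A : Matrix (Fin n) (Fin n) ℝ) (h : IsHankelMat A) (hA : TotallyNonneg A) :
    IsHankelMat (A.map F) ∧ TotallyNonneg (A.map F) := by
  have hle := hk_four_le hG hFG hL
  refine ⟨fun i j k l hh => by simp [h i j k l hh], ?_⟩
  by_cases hpos : ∀ i j, 0 < A i j
  · have : A.map F = A.map G := by
      ext i j; exact hFG _ (hpos i j)
    rw [this]
    exact hk_ame_tn hG h hA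
  push Not at hpos
  obtain ⟨i0, j0, h0⟩ := hpos
  rcases n with _ | m
  · exact i0.elim0
  obtain ⟨s, rfl⟩ := hk_seq h
  have h0' : s ((i0:ℕ) + (j0:ℕ)) = 0 := le_antisymm h0 (hk_tn_nonneg hA i0 j0)
  rcases Nat.eq_zero_or_pos m with rfl | hm
  · have : (hkH s (0+1) 0).map F = Matrix.of fun _ _ => F 0 := by
      ext i j
      have hi : i = i0 := Fin.ext (by omega)
      have hj : j = j0 := Fin.ext (by omega)
      subst hi hj
      simp only [Matrix.map_apply, Matrix.of_apply]
      congr 1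
    rw [this]
    exact (HkM.const _ hF0).tn
  have hz := hk_zero hA _ (by omega) h0'
  have hs0 : 0 ≤ s 0 := by simpa [hkH] using hk_tn_nonneg hA 0 0
  have hs1 : 0 ≤ s (2*m) := by simpa [hkH, two_mul] using hk_tn_nonneg hA (Fin.last m) (Fin.last m)
  have := hk_degenerate (m+1) (F 0) (F (s 0) - F 0) (F (s (2*m)) - F 0) hF0
    (sub_nonneg.2 (hle _ hs0)) (sub_nonneg.2 (hle _ hs1))
  convert this using 1
  ext i j
  simp only [Matrix.map_apply, Matrix.of_apply, hkH, add_zero]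
  have hi := i.2
  have hj := j.2
  by_cases h1 : (i:ℕ) + (j:ℕ) = 0
  · rw [h1, show m + 1 - 1 - (i:ℕ) + (m + 1 - 1 - (j:ℕ)) = 2 * m by omega,
      zero_pow (by omega : 2 * m ≠ 0)]
    simp
  by_cases h2 : (i:ℕ) + (j:ℕ) = 2 * m
  · rw [h2, show m + 1 - 1 - (i:ℕ) + (m + 1 - 1 - (j:ℕ)) = 0 by omega,
      zero_pow (by omega : 2 * m ≠ 0)]
    simp
  · rw [zero_pow h1, zero_pow (by omega), hz _ (by omega) (by omega)]
    simp

/-- The weak hypothesis on `F` from which everything is derived. -/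
def HkW (F : ℝ → ℝ) : Prop :=
  0 ≤ F 0 ∧ (∀ x y, 0 ≤ x → x ≤ y → F x ≤ F y) ∧
  ∀ (n : ℕ) (v : Fin n → ℝ) (a t u : ℝ), 0 ≤ a → 0 ≤ t → 0 < u →
    0 ≤ ∑ i, ∑ j, v i * v j * F (a + t * u ^ ((i:ℕ) + (j:ℕ)))

lemma hk_W_mono {F : ℝ → ℝ} (h : HkW F) : Monotone (fun x => F (max x 0)) := by
  intro x y hxy
  exact h.2.1 _ _ (le_max_right _ _) (max_le_max_right 0 hxy)

lemma hk_W_mid {F : ℝ → ℝ} (h : HkW F) (a u : ℝ) (ha : 0 ≤ a) (hu : 0 < u) :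
    F (a * u) ^ 2 ≤ F a * F (a * u ^ 2) := by
  have key : ∀ x y : ℝ, 0 ≤ x ^ 2 * F a + 2 * x * y * F (a * u) + y ^ 2 * F (a * u ^ 2) := by
    intro x y
    have := h.2.2 2 ![x, y] 0 a u le_rfl ha hu
    simp [Fin.sum_univ_two] at this
    linarith
  have hp : ∀ z, 0 ≤ z → 0 ≤ F z := fun z hz => h.1.trans (h.2.1 0 z le_rfl hz)
  have h1 := hp a ha
  have h3 := hp (a * u ^ 2) (by positivity)
  have := discrim_le_zero (a := F a) (b := 2 * F (a * u)) (c := F (a * u ^ 2)) (fun x => by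
    have := key x 1; linarith)
  rw [discrim] at this
  linarith

lemma hk_W_cont {F : ℝ → ℝ} (h : HkW F) (b : ℝ) (hb : 0 < b) :
    ContinuousAt (fun x => F (max x 0)) b := by
  have hm := hk_W_mono h
  set H : ℝ → ℝ := fun x => F (max x 0) with hH
  rw [hm.continuousAt_iff_leftLim_eq_rightLim]
  refine le_antisymm (hm.leftLim_le_rightLim le_rfl) ?_
  set R := Function.rightLim H b with hR
  set L := Function.leftLim H b with hL
  have hHp : ∀ x, 0 < x → H x = F x := by
    intro x hx; simp [hH, max_eq_left hx.le]
  have hHnn : ∀ x, 0 ≤ H x := fun x => h.1.trans (h.2.1 0 _ le_rfl (le_max_right _ _))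
  have hL0 : 0 ≤ L := (hHnn (b-1)).trans (hm.le_leftLim (by linarith))
  have hR0 : 0 ≤ R := (hHnn b).trans (hm.le_rightLim le_rfl)
  have key : ∀ s : ℝ, 1 < s → R ^ 2 ≤ L * H (b * s ^ 3) := by
    intro s hs
    have hs0 : 0 < s := by linarith
    have h1 := hk_W_mid h (b / s) (s ^ 2) (by positivity) (by positivity)
    rw [show b / s * s ^ 2 = b * s by field_simp, show b / s * (s^2)^2 = b * s ^ 3 by field_simp,
      ← hHp _ (by positivity), ← hHp _ (by positivity), ← hHp _ (by positivity)] at h1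
    have h2 : R ≤ H (b * s) := hm.rightLim_le (by nlinarith)
    have h3 : H (b / s) ≤ L := hm.le_leftLim (by rw [div_lt_iff₀ hs0]; nlinarith)
    calc R ^ 2 ≤ H (b * s) ^ 2 := by gcongr
      _ ≤ _ := h1
      _ ≤ _ := by gcongr; exact hHnn _
  have ht : Tendsto (fun s : ℝ => L * H (b * s ^ 3)) (nhdsWithin 1 (Set.Ioi 1)) (nhds (L * R)) := by
    refine Tendsto.const_mul L ((hm.tendsto_rightLim b).comp ?_)
    refine tendsto_nhdsWithin_iff.2 ⟨?_, ?_⟩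
    · have : Continuous fun s : ℝ => b * s ^ 3 := by fun_prop
      have h := this.tendsto 1
      simp only [one_pow, mul_one] at h
      exact h.mono_left nhdsWithin_le_nhds
    · filter_upwards [self_mem_nhdsWithin] with s hs
      have : (1:ℝ) < s ^ 3 := one_lt_pow₀ hs (by norm_num)
      simp only [Set.mem_Ioi]; nlinarith
  have hfin : R ^ 2 ≤ L * R := ge_of_tendsto ht (by
    filter_upwards [self_mem_nhdsWithin] with s hs using key s hs)
  rcases hR0.eq_or_lt with h0 | h0
  · rw [← h0]; exact hL0
  · rw [sq] at hfin; exact le_of_mul_le_mul_right hfin h0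

lemma hk_neg_near (n : ℕ) : ∀ φ : ℝ → ℝ, ContDiff ℝ (⊤ : ℕ∞) φ →
    (∀ k < n, iteratedDeriv k φ 0 = 0) → iteratedDeriv n φ 0 < 0 →
    ∃ ε > 0, ∀ t ∈ Set.Ioo 0 ε, φ t < 0 := by
  induction n with
  | zero =>
    intro φ hφ _ h
    rw [iteratedDeriv_zero] at h
    have := (hφ.continuous.tendsto 0).eventually_lt_const h
    obtain ⟨ε, hε, hh⟩ := Metric.eventually_nhds_iff.1 this
    refine ⟨ε, hε, fun t ht => hh ?_⟩
    rw [Real.dist_0_eq_abs, abs_of_pos ht.1]; exact ht.2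
  | succ n ih =>
    intro φ hφ h0 h
    have hd : ContDiff ℝ (⊤ : ℕ∞) (deriv φ) := by
      have := (contDiff_infty_iff_deriv (f := φ) (𝕜 := ℝ)).1 hφ
      exact this.2
    obtain ⟨ε, hε, hh⟩ := ih (deriv φ) hd (fun k hk => by
      rw [← iteratedDeriv_succ']; exact h0 _ (by omega)) (by rwa [← iteratedDeriv_succ'])
    refine ⟨ε, hε, fun t ht => ?_⟩
    have hanti : StrictAntiOn φ (Set.Icc 0 t) := by
      refine strictAntiOn_of_deriv_neg (convex_Icc 0 t) hφ.continuous.continuousOn ?_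
      intro x hx
      rw [interior_Icc] at hx
      exact hh x ⟨hx.1, hx.2.trans ht.2⟩
    have := hanti ⟨le_rfl, ht.1.le⟩ ⟨ht.1.le, le_rfl⟩ ht.1
    have h00 := h0 0 (by omega)
    rw [iteratedDeriv_zero] at h00
    linarith

lemma hk_sq_sum {n : ℕ} (v : Fin n → ℝ) (x : ℝ) :
    ∑ i, ∑ j, v i * v j * x ^ ((i:ℕ) + (j:ℕ)) = (∑ i, v i * x ^ (i:ℕ)) ^ 2 := by
  rw [sq, Finset.sum_mul_sum]
  refine Finset.sum_congr rfl fun i _ => Finset.sum_congr rfl fun j _ => by ring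

lemma hk_deriv_nonneg (g : ℝ → ℝ) (hg : ContDiff ℝ (⊤ : ℕ∞) g) (a : ℝ)
    (hq : ∀ (n : ℕ) (v : Fin n → ℝ) (t : ℝ), 0 ≤ t →
      0 ≤ ∑ i, ∑ j, v i * v j * g (a + t * 2 ^ ((i:ℕ) + (j:ℕ)))) (n : ℕ) :
    0 ≤ iteratedDeriv n g a := by
  let p : Polynomial ℝ := ∏ k ∈ Finset.range n, (Polynomial.X - Polynomial.C ((2:ℝ) ^ k))
  have hpd : p.natDegree = n := by
    simp only [p]
    rw [Polynomial.natDegree_prod_of_monic _ _ (fun k _ => Polynomial.monic_X_sub_C _)]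
    simp only [Polynomial.natDegree_X_sub_C]
    simp
  let v : Fin (n+1) → ℝ := fun i => p.coeff i
  have hv : ∀ x : ℝ, ∑ i, v i * x ^ (i:ℕ) = p.eval x := by
    intro x
    rw [Polynomial.eval_eq_sum_range, hpd, Finset.sum_range]
  let φ : ℝ → ℝ := fun t => ∑ i, ∑ j, v i * v j * g (a + t * 2 ^ ((i:ℕ) + (j:ℕ)))
  have hφ : ContDiff ℝ (⊤ : ℕ∞) φ := by
    refine ContDiff.sum fun i _ => ContDiff.sum fun j _ => contDiff_const.mul (hg.comp ?_)
    fun_prop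
  have hφd : ∀ k, iteratedDeriv k φ 0 = (p.eval (2 ^ k)) ^ 2 * iteratedDeriv k g a := by
    intro k
    have hc : ∀ m : ℕ, ContDiff ℝ k (fun t : ℝ => g (a + t * 2 ^ m)) := fun m =>
      (hg.comp (by fun_prop : ContDiff ℝ (⊤ : ℕ∞) (fun t : ℝ => a + t * 2 ^ m))).of_le (by exact_mod_cast le_top)
    have h1 : ∀ m : ℕ, iteratedDeriv k (fun t : ℝ => g (a + t * 2 ^ m)) 0 =
        (2 ^ m) ^ k * iteratedDeriv k g a := by
      intro m
      have e := iteratedDeriv_comp_const_mul (n := k) (f := fun y => g (a + y))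
        ((hg.comp (by fun_prop : ContDiff ℝ (⊤ : ℕ∞) (fun y : ℝ => a + y))).of_le (by exact_mod_cast le_top)) ((2:ℝ) ^ m)
      have e2 := congrFun e 0
      simp only [mul_comm ((2:ℝ)^m)] at e2
      rw [e2, iteratedDeriv_comp_const_add]
      simp
    simp only [φ]
    rw [iteratedDeriv_fun_sum (fun i _ => (ContDiff.sum fun j _ =>
      contDiff_const.mul (hc _)).contDiffAt)]
    rw [← hv, ← hk_sq_sum, Finset.sum_mul]
    refine Finset.sum_congr rfl fun i _ => ?_
    rw [iteratedDeriv_fun_sum (fun j _ => (contDiff_const.mul (hc _)).contDiffAt), Finset.sum_mul]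
    refine Finset.sum_congr rfl fun j _ => ?_
    rw [iteratedDeriv_const_mul_field, h1, ← pow_mul, ← pow_mul, mul_comm k]
    ring
  by_contra hneg
  push Not at hneg
  have hpn : p.eval (2 ^ n) ≠ 0 := by
    simp only [p, Polynomial.eval_prod, Finset.prod_ne_zero_iff]
    intro k hk
    simp only [Polynomial.eval_sub, Polynomial.eval_X, Polynomial.eval_C]
    rw [sub_ne_zero]
    intro h
    have := pow_right_injective₀ (a := (2:ℝ)) (by norm_num) (by norm_num) h
    simp at hk; omega
  obtain ⟨ε, hε, hh⟩ := hk_neg_near n φ hφ (fun k hk => by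
    rw [hφd]
    have : p.eval (2 ^ k) = 0 := by
      simp only [p, Polynomial.eval_prod]
      exact Finset.prod_eq_zero (Finset.mem_range.2 hk) (by simp)
    rw [this]; simp) (by
      rw [hφd]
      have : 0 < p.eval (2 ^ n) ^ 2 := by positivity
      nlinarith)
  have h1 := hh (ε/2) ⟨by linarith, by linarith⟩
  have h2 := hq (n+1) v (ε/2) (by linarith)
  simp only [φ] at h1
  linarith

lemma hk_fwd_smooth (δ h : ℝ) (hh : 0 < h) (n : ℕ) : ∀ g : ℝ → ℝ, ContDiff ℝ (⊤ : ℕ∞) g →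
    (∀ k, ∀ a > δ, 0 ≤ iteratedDeriv k g a) → ∀ x > δ, 0 ≤ (fwdDiff h)^[n] g x := by
  induction n with
  | zero =>
    intro g _ h0 x hx
    simpa using h0 0 x hx
  | succ n ih =>
    intro g hg h0 x hx
    rw [Function.iterate_succ_apply]
    have hs : ContDiff ℝ (⊤ : ℕ∞) (fun y => g (y + h)) := hg.comp (by fun_prop)
    refine ih (fwdDiff h g) ?_ ?_ x hx
    · exact hs.sub hg
    · intro k a ha
      have e : iteratedDeriv k (fwdDiff h g) a =
          iteratedDeriv k g (a + h) - iteratedDeriv k g a := by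
        have := iteratedDeriv_fun_sub (n := k) (x := a) (f := fun y => g (y+h)) (g := g)
          (hs.of_le (by exact_mod_cast le_top)).contDiffAt
          (hg.of_le (by exact_mod_cast le_top)).contDiffAt
        rw [iteratedDeriv_comp_add_const] at this
        exact this
      rw [e, sub_nonneg]
      have hmono : MonotoneOn (iteratedDeriv k g) (Set.Ioi δ) := by
        have hcd : ContDiff ℝ 1 (iteratedDeriv k g) := by
          have hcd0 : ContDiff ℝ (1:ℕ) (deriv^[k] g) :=
            ContDiff.iterate_deriv' 1 k (hg.of_le (by exact_mod_cast le_top))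
          rw [iteratedDeriv_eq_iterate]
          exact_mod_cast hcd0
        refine monotoneOn_of_deriv_nonneg (convex_Ioi δ) hcd.continuous.continuousOn
          (hcd.differentiable (by simp)).differentiableOn ?_
        intro y hy
        rw [interior_Ioi] at hy
        rw [← iteratedDeriv_succ]
        exact h0 _ _ hy
      exact hmono ha (show δ < a + h by linarith) (by linarith)

open scoped Convolution in
lemma hk_fwd_W {F : ℝ → ℝ} (h : HkW F) (n : ℕ) (s x : ℝ) (hs : 0 < s) (hx : 0 < x) :
    0 ≤ (fwdDiff s)^[n] F x := by
  have hm := hk_W_mono h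
  have hcont := hk_W_cont h
  set H : ℝ → ℝ := fun x => F (max x 0) with hH
  have hli : LocallyIntegrable H volume := hm.locallyIntegrable
  let ψ : ℕ → ContDiffBump (0:ℝ) := fun N =>
    ⟨1 / (2 * ((N:ℝ) + 1)), 1 / ((N:ℝ) + 1), by positivity, by
      apply one_div_lt_one_div_of_lt <;> linarith [Nat.cast_nonneg (α := ℝ) N]⟩
  have hout : Tendsto (fun N => (ψ N).rOut) atTop (nhds 0) := tendsto_one_div_add_atTop_nhds_zero_nat
  let g : ℕ → ℝ → ℝ := fun N => ((ψ N).normed volume ⋆[ContinuousLinearMap.lsmul ℝ ℝ, volume] H)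
  have hgt : ∀ y, 0 < y → Tendsto (fun N => g N y) atTop (nhds (H y)) := by
    intro y hy
    refine ContDiffBump.convolution_tendsto_right (g := fun _ => H) (k := fun _ => y) (x₀ := y) hout
      (Eventually.of_forall fun _ => hm.measurable.aestronglyMeasurable) ?_ tendsto_const_nhds
    exact (hcont y hy).tendsto.comp tendsto_snd
  have hgs : ∀ N, ContDiff ℝ (⊤ : ℕ∞) (g N) := fun N =>
    ((ψ N).hasCompactSupport_normed (μ := volume)).contDiff_convolution_left _ ((ψ N).contDiff_normed (μ := volume)) hli
  have hpos : ∀ N : ℕ, ∀ y > (ψ N).rOut, 0 ≤ (fwdDiff s)^[n] (g N) y := by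
    intro N
    refine hk_fwd_smooth _ s hs n (g N) (hgs N) ?_
    intro k a ha
    refine hk_deriv_nonneg (g N) (hgs N) a ?_ k
    intro m v t ht
    have hint : ∀ y, Integrable (fun z => (ψ N).normed volume z * H (y - z)) volume := by
      intro y
      have := ((ψ N).hasCompactSupport_normed (μ := volume)).convolutionExists_left
        (ContinuousLinearMap.lsmul ℝ ℝ) ((ψ N).continuous_normed (μ := volume)) hli y
      simpa [ConvolutionExistsAt] using this
    have e : ∑ i, ∑ j, v i * v j * g N (a + t * 2 ^ ((i:ℕ) + (j:ℕ))) =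
        ∫ z, (ψ N).normed volume z *
          ∑ i, ∑ j, v i * v j * H (a + t * 2 ^ ((i:ℕ) + (j:ℕ)) - z) := by
      simp only [Finset.mul_sum]
      rw [integral_finsetSum]
      · refine Finset.sum_congr rfl fun i _ => ?_
        rw [integral_finsetSum]
        · refine Finset.sum_congr rfl fun j _ => ?_
          simp only [g, convolution_def, ContinuousLinearMap.lsmul_apply, smul_eq_mul]
          rw [← integral_const_mul]
          congr 1; ext z; ring
        · intro j _
          refine ((hint (a + t * 2 ^ ((i:ℕ) + (j:ℕ)))).const_mul (v i * v j)).congr (Eventually.of_forall fun z => ?_)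
          simp only; ring
      · intro i _
        refine integrable_finsetSum _ fun j _ => ?_
        refine ((hint (a + t * 2 ^ ((i:ℕ) + (j:ℕ)))).const_mul (v i * v j)).congr (Eventually.of_forall fun z => ?_)
        simp only; ring
    rw [e]
    refine integral_nonneg fun z => ?_
    by_cases hz : z ∈ Function.support ((ψ N).normed volume)
    · refine mul_nonneg ((ψ N).nonneg_normed z) ?_
      rw [(ψ N).support_normed_eq, Metric.mem_ball, Real.dist_0_eq_abs] at hz
      have haz : 0 ≤ a - z := by linarith [le_abs_self z]
      have := h.2.2 m v (a - z) t 2 haz ht (by norm_num)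
      refine this.trans_eq (Finset.sum_congr rfl fun i _ => Finset.sum_congr rfl fun j _ => ?_)
      simp only [hH]
      rw [max_eq_left (by nlinarith [mul_nonneg ht (by positivity : (0:ℝ) ≤ 2 ^ ((i:ℕ) + (j:ℕ)))])]
      ring_nf
    · rw [Function.notMem_support.1 hz]; simp
  have hlim : Tendsto (fun N => (fwdDiff s)^[n] (g N) x) atTop (nhds ((fwdDiff s)^[n] F x)) := by
    simp only [fwdDiff_iter_eq_sum_shift]
    refine tendsto_finsetSum _ fun k _ => Tendsto.const_smul ?_ _
    have hy : 0 < x + k • s := by simp; positivity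
    have := hgt _ hy
    simpa only [hH, max_eq_left hy.le] using this
  refine ge_of_tendsto hlim ?_
  filter_upwards [hout.eventually_lt_const hx] with N hN
  exact hpos N x hN

lemma hk_bern_id (f : ℝ → ℝ) (h x y : ℝ) (N : ℕ) :
    ∑ k ∈ Finset.range (N+1), (N.choose k : ℝ) * x ^ k * (1 - x) ^ (N - k) * f (y + k * h) =
    ∑ k ∈ Finset.range (N+1), (N.choose k : ℝ) * x ^ k * (fwdDiff h)^[k] f y := by
  let D : Module.End ℝ (ℝ → ℝ) :=
    { toFun := fwdDiff h
      map_add' := fun f g => fwdDiff_add h f g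
      map_smul' := fun r f => fwdDiff_const_smul h r f }
  have hD : ∀ (k : ℕ) (g : ℝ → ℝ), (D ^ k) g = (fwdDiff h)^[k] g := by
    intro k g
    rw [Module.End.pow_apply]; rfl
  have hS : ∀ (k : ℕ) (g : ℝ → ℝ) (y : ℝ), ((D + 1) ^ k) g y = g (y + k * h) := by
    intro k
    induction k with
    | zero => intro g y; simp
    | succ k ih =>
      intro g y
      rw [pow_succ, Module.End.mul_apply, ih]
      simp [D, fwdDiff]
      ring_nf
  have e : x • (D + 1) + (1 - x) • (1 : Module.End ℝ (ℝ → ℝ)) = x • D + 1 := by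
    module
  have c1 : Commute (x • (D + 1)) ((1 - x) • (1 : Module.End ℝ (ℝ → ℝ))) :=
    ((Commute.one_right _).smul_right _)
  have c2 : Commute (x • D) (1 : Module.End ℝ (ℝ → ℝ)) := Commute.one_right _
  have e1 := c1.add_pow N
  have e2 := c2.add_pow N
  rw [e, e2] at e1
  have e3 := congrFun (LinearMap.congr_fun e1 f) y
  simp only [LinearMap.sum_apply, Finset.sum_apply, smul_pow, one_pow, mul_one,
    mul_smul_comm, LinearMap.smul_apply, Pi.smul_apply, smul_eq_mul,
    ← nsmul_eq_mul', hD, hS] at e3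
  refine Eq.trans ?_ (e3.symm.trans ?_)
  · refine Finset.sum_congr rfl fun k _ => ?_
    simp; ring
  · refine Finset.sum_congr rfl fun k _ => ?_
    simp; ring

lemma hk_bern (f : ℝ → ℝ) (hf : ContinuousOn f (Set.Ici 0))
    (hd : ∀ (n : ℕ) (s : ℝ), 0 < s → 0 ≤ (fwdDiff s)^[n] f 0) (b ε : ℝ) (hb : 0 < b) (hε : 0 < ε) :
    ∃ (N : ℕ) (c : ℕ → ℝ), (∀ k, 0 ≤ c k) ∧ (∀ k, N < k → c k = 0) ∧
      ∀ x, 0 ≤ x → x ≤ b → |∑ k ∈ Finset.range (N+1), c k * x ^ k - f x| < ε := by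
  let q : C(unitInterval, ℝ) := ⟨fun y => f (b * y), by
    refine hf.comp_continuous (by fun_prop) (fun y => ?_)
    exact mul_nonneg hb.le y.2.1⟩
  have h1 := (bernsteinApproximation_uniform q)
  rw [Metric.tendsto_atTop] at h1
  obtain ⟨N0, hN0⟩ := h1 ε hε
  have hN := hN0 (N0+1) (by omega)
  set N := N0 + 1 with hNdef
  have hNpos : (0:ℝ) < N := by positivity
  refine ⟨N, fun k => (N.choose k : ℝ) * (fwdDiff (b / N))^[k] f 0 / b ^ k, ?_, ?_, ?_⟩
  · intro k
    have := hd k (b / N) (by positivity)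
    positivity
  · intro k hk
    simp [Nat.choose_eq_zero_of_lt hk]
  · intro x hx hxb
    have hy : x / b ∈ unitInterval := ⟨by positivity, by rw [div_le_one hb]; exact hxb⟩
    have h2 := (ContinuousMap.dist_lt_iff hε).1 hN ⟨x / b, hy⟩
    rw [bernsteinApproximation.apply, Real.dist_eq] at h2
    have h3 : q ⟨x / b, hy⟩ = f x := by
      simp only [q, ContinuousMap.coe_mk]; rw [mul_div_cancel₀ _ hb.ne']
    rw [h3] at h2
    convert h2 using 3
    have h4 := hk_bern_id f (b / N) (x / b) 0 N
    rw [Finset.sum_range] at h4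
    have h5 : ∑ k ∈ Finset.range (N+1), (N.choose k : ℝ) * (fwdDiff (b / N))^[k] f 0 / b ^ k * x ^ k =
      ∑ k ∈ Finset.range (N+1), (N.choose k : ℝ) * (x / b) ^ k * (fwdDiff (b / N))^[k] f 0 := by
      refine Finset.sum_congr rfl fun k _ => ?_
      rw [div_pow]; field_simp
    rw [h5, ← h4]
    refine Finset.sum_congr rfl fun k _ => ?_
    rw [bernstein_apply, smul_eq_mul]
    congr 2
    simp only [bernstein.z, zero_add]
    ring

lemma hk_bern_lim (f : ℝ → ℝ) (hf : ContinuousOn f (Set.Ici 0))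
    (hd : ∀ (n : ℕ) (s : ℝ), 0 < s → 0 ≤ (fwdDiff s)^[n] f 0) :
    ∃ c : ℕ → ℝ, (∀ k, 0 ≤ c k) ∧ ∀ x, 0 ≤ x → HasSum (fun k => c k * x ^ k) (f x) := by
  choose N c hc0 hcz hc using fun m : ℕ =>
    hk_bern f hf hd ((m:ℝ) + 1) (1 / ((m:ℝ) + 1)) (by positivity) (by positivity)
  have hsum : ∀ m x, HasSum (fun k => c m k * x ^ k) (∑ k ∈ Finset.range (N m+1), c m k * x ^ k) := by
    intro m x
    refine hasSum_sum_of_ne_finset_zero fun k hk => ?_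
    rw [Finset.mem_range] at hk
    rw [hcz m k (by omega), zero_mul]
  have hbd : ∀ (m k : ℕ) (x : ℝ), 0 ≤ x → x ≤ (m:ℝ) + 1 → c m k * x ^ k ≤ f x + 1 := by
    intro m k x hx hxm
    have h1 : c m k * x ^ k ≤ _ := le_hasSum (hsum m x) k
      (fun j _ => mul_nonneg (hc0 m j) (pow_nonneg hx j))
    have h2 := (abs_lt.1 (hc m x hx hxm)).2
    have h3 : 1 / ((m:ℝ) + 1) ≤ 1 := by
      rw [div_le_one (by positivity)]; linarith [Nat.cast_nonneg (α := ℝ) m]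
    linarith
  have hcomp : IsCompact (Set.pi Set.univ (fun _ : ℕ => Set.Icc (0:ℝ) (f 1 + 1))) :=
    isCompact_univ_pi fun _ => isCompact_Icc
  obtain ⟨c', -, φ, hφ, hlim⟩ := hcomp.tendsto_subseq (x := c) (fun m k _ => ⟨hc0 m k, by
    simpa using hbd m k 1 zero_le_one (by linarith [Nat.cast_nonneg (α := ℝ) m])⟩)
  have hlim' : ∀ k, Tendsto (fun m => c (φ m) k) atTop (nhds (c' k)) := fun k =>
    (tendsto_pi_nhds.1 hlim) k
  have hc'0 : ∀ k, 0 ≤ c' k := fun k => ge_of_tendsto' (hlim' k) fun m => hc0 _ k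
  refine ⟨c', hc'0, fun x hx => ?_⟩
  set R := 2 * x + 1 with hR
  have hR0 : 0 < R := by positivity
  have hgeo : Summable (fun k : ℕ => (f R + 1) * (1/2 : ℝ) ^ k) :=
    (summable_geometric_of_lt_one (by norm_num) (by norm_num)).mul_left _
  have hlarge : ∀ y : ℝ, ∀ᶠ m : ℕ in atTop, y ≤ (φ m : ℝ) + 1 := by
    intro y
    have := (tendsto_natCast_atTop_atTop (R := ℝ)).comp hφ.tendsto_atTop
    filter_upwards [this.eventually_ge_atTop y] with m hm
    simp at hm; linarith
  have hb2 : ∀ᶠ m : ℕ in atTop, ∀ k, ‖c (φ m) k * x ^ k‖ ≤ (f R + 1) * (1/2 : ℝ) ^ k := by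
    filter_upwards [hlarge R] with m hm k
    rw [Real.norm_of_nonneg (mul_nonneg (hc0 _ _) (pow_nonneg hx _))]
    have h1 := hbd (φ m) k R hR0.le hm
    calc c (φ m) k * x ^ k ≤ c (φ m) k * (R * (1/2)) ^ k := by
          gcongr
          · exact hc0 _ _
          · rw [hR]; linarith
      _ = c (φ m) k * R ^ k * (1/2) ^ k := by rw [mul_pow]; ring
      _ ≤ _ := by gcongr
  have ht := tendsto_tsum_of_dominated_convergence (𝓕 := atTop) (f := fun m k => c (φ m) k * x ^ k)
    (g := fun k => c' k * x ^ k) hgeo (fun k => (hlim' k).mul_const _) hb2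
  have ht2 : Tendsto (fun m => ∑' k, c (φ m) k * x ^ k) atTop (nhds (f x)) := by
    rw [Metric.tendsto_nhds]
    intro ε hε
    have h0 := (tendsto_one_div_add_atTop_nhds_zero_nat (𝕜 := ℝ)).comp hφ.tendsto_atTop
    filter_upwards [hlarge x, h0.eventually_lt_const hε] with m hm hm2
    rw [(hsum (φ m) x).tsum_eq, Real.dist_eq]
    exact (hc (φ m) x hx hm).trans hm2
  have hs : Summable (fun k => c' k * x ^ k) := by
    refine Summable.of_norm_bounded hgeo fun k => ?_
    exact le_of_tendsto ((hlim' k).mul_const _).norm (hb2.mono fun m hm => hm k)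
  rw [← tendsto_nhds_unique ht ht2]
  exact hs.hasSum

lemma hk_W_four {F : ℝ → ℝ} (h : HkW F) :
    ∃ G : ℝ → ℝ, AbsolutelyMonotonicEntire G ∧ (∀ x ∈ Set.Ioi (0 : ℝ), F x = G x) ∧
          0 ≤ F 0 ∧ ∃ L : ℝ, Tendsto F (nhdsWithin 0 (Set.Ioi 0)) (nhds L) ∧ F 0 ≤ L := by
  have hm := hk_W_mono h
  set H : ℝ → ℝ := fun x => F (max x 0) with hH
  have hHp : ∀ x, 0 ≤ x → H x = F x := by
    intro x hx; simp [hH, max_eq_left hx]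
  set L := Function.rightLim H 0 with hL
  have hLt : Tendsto F (nhdsWithin 0 (Set.Ioi 0)) (nhds L) := by
    refine (hm.tendsto_rightLim 0).congr' ?_
    filter_upwards [self_mem_nhdsWithin] with x hx using hHp x (le_of_lt hx)
  have hFL : F 0 ≤ L := by
    rw [← hHp 0 le_rfl]; exact hm.le_rightLim le_rfl
  let f : ℝ → ℝ := Function.update F 0 L
  have hfp : ∀ x, 0 < x → f x = F x := fun x hx => Function.update_of_ne hx.ne' _ _
  have hf0 : f 0 = L := Function.update_self _ _ _
  have hf0t : ContinuousWithinAt f (Set.Ici 0) 0 := by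
    rw [← continuousWithinAt_Ioi_iff_Ici]
    unfold ContinuousWithinAt
    rw [hf0]
    refine hLt.congr' ?_
    filter_upwards [self_mem_nhdsWithin] with x hx using (hfp x hx).symm
  have hfc : ContinuousOn f (Set.Ici 0) := by
    intro x hx
    rcases (show (0:ℝ) ≤ x from hx).eq_or_lt with h0 | h0
    · rw [← h0]; exact hf0t
    · refine ((hk_W_cont h x h0).congr ?_).continuousWithinAt
      filter_upwards [Ioi_mem_nhds h0] with y hy
      rw [hfp y hy]; exact hHp y (le_of_lt hy)
  have hd : ∀ (n : ℕ) (s : ℝ), 0 < s → 0 ≤ (fwdDiff s)^[n] f 0 := by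
    intro n s hs
    have ht : Tendsto (fun x => (fwdDiff s)^[n] f x) (nhdsWithin 0 (Set.Ioi 0))
        (nhds ((fwdDiff s)^[n] f 0)) := by
      simp only [fwdDiff_iter_eq_sum_shift]
      refine tendsto_finsetSum _ fun k _ => Tendsto.const_smul ?_ _
      have hk : (0:ℝ) ≤ k • s := by positivity
      refine (hfc (0 + k • s) (by simpa using hk)).tendsto.comp ?_
      refine tendsto_nhdsWithin_iff.2 ⟨?_, ?_⟩
      · exact ((continuous_id.add continuous_const).tendsto 0).mono_left nhdsWithin_le_nhds
      · filter_upwards [self_mem_nhdsWithin] with x hx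
        exact add_nonneg (le_of_lt hx) hk
    refine ge_of_tendsto ht ?_
    filter_upwards [self_mem_nhdsWithin] with x hx
    have e : (fwdDiff s)^[n] f x = (fwdDiff s)^[n] F x := by
      simp only [fwdDiff_iter_eq_sum_shift]
      refine Finset.sum_congr rfl fun k _ => ?_
      rw [hfp]
      have : (0:ℝ) ≤ k • s := by positivity
      exact add_pos_of_pos_of_nonneg hx this
    rw [e]
    exact hk_fwd_W h n s x hs hx
  obtain ⟨c, hc, hs⟩ := hk_bern_lim f hfc hd
  refine ⟨fun x => ∑' k, c k * x ^ k, ⟨c, hc, fun x => ?_⟩, ?_, h.1, L, hLt, hFL⟩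
  · refine Summable.hasSum (Summable.of_norm_bounded (hs |x| (abs_nonneg x)).summable fun k => ?_)
    rw [norm_mul, norm_pow, Real.norm_of_nonneg (hc k), Real.norm_eq_abs]
  · intro x hx
    exact ((hs x (le_of_lt hx)).tsum_eq.trans (hfp x hx)).symm

lemma hk_one_W {F : ℝ → ℝ}
    (h : ∀ (n : ℕ) (A : Matrix (Fin n) (Fin n) ℝ), IsHankelMat A → TotallyNonneg A →
          (A.map F).PosSemidef) : HkW F := by
  have hq : ∀ (n : ℕ) (A : Matrix (Fin n) (Fin n) ℝ), IsHankelMat A → TotallyNonneg A →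
      ∀ v : Fin n → ℝ, 0 ≤ ∑ i, ∑ j, v i * v j * F (A i j) := by
    intro n A h1 h2 v
    have := (h n A h1 h2).dotProduct_mulVec_nonneg v
    rw [hk_quad] at this
    exact this
  refine ⟨?_, ?_, ?_⟩
  · have := hq 1 (Matrix.of fun _ _ => 0) (fun _ _ _ _ _ => rfl) (HkM.const 0 le_rfl).tn (fun _ => 1)
    simpa using this
  · intro x y hx hxy
    have := hq 2 (Matrix.of fun i j : Fin 2 => x + (y - x)*0^((i:ℕ)+(j:ℕ)) +
      (y - x)*0^((2-1-(i:ℕ))+(2-1-(j:ℕ)))) (by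
        intro i j k l hh
        fin_cases i <;> fin_cases j <;> fin_cases k <;> fin_cases l <;> simp at hh ⊢) (by
        exact hk_degenerate 2 x (y-x) (y-x) hx (by linarith) (by linarith)) ![1, -1]
    simp [Fin.sum_univ_two] at this
    linarith
  · intro n v a t u ha ht hu
    have := hq n (Matrix.of fun i j : Fin n => a + t * u ^ ((i:ℕ)+(j:ℕ))) (by
      intro i j k l hh; simp [hh]) ((HkM.const a ha).add (HkM.single t u ht hu.le)).tn v
    simpa using this

lemma hk_quad_moment {ν : Measure ℝ} (hν : IsAdmissible ν) {n : ℕ} (v : Fin n → ℝ) :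
    0 ≤ ∑ i, ∑ j, v i * v j * moment ν ((i:ℕ) + (j:ℕ)) := by
  have e : ∑ i, ∑ j, v i * v j * moment ν ((i:ℕ) + (j:ℕ)) = ∫ x, (∑ i, v i * x ^ (i:ℕ)) ^ 2 ∂ν := by
    simp only [← hk_sq_sum]
    rw [integral_finsetSum]
    · refine Finset.sum_congr rfl fun i _ => ?_
      rw [integral_finsetSum]
      · refine Finset.sum_congr rfl fun j _ => ?_
        rw [integral_const_mul]; rfl
      · intro j _
        exact (hν _).const_mul _
    · intro i _
      exact integrable_finsetSum _ fun j _ => (hν _).const_mul _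
  rw [e]
  exact integral_nonneg fun x => sq_nonneg _

lemma hk_two_atom (a b u w : ℝ) (ha : 0 ≤ a) (hb : 0 ≤ b) (hu : 0 ≤ u) (hw : 0 ≤ w) :
    (fun k : ℕ => a * u ^ k + b * w ^ k) ∈ momentSet (Set.Ici (0:ℝ)) := by
  have i1 : ∀ k : ℕ, Integrable (fun x : ℝ => x ^ k) (ENNReal.ofReal a • Measure.dirac u) :=
    fun k => (integrable_dirac (by simp)).smul_measure ENNReal.ofReal_ne_top
  have i2 : ∀ k : ℕ, Integrable (fun x : ℝ => x ^ k) (ENNReal.ofReal b • Measure.dirac w) :=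
    fun k => (integrable_dirac (by simp)).smul_measure ENNReal.ofReal_ne_top
  refine ⟨ENNReal.ofReal a • Measure.dirac u + ENNReal.ofReal b • Measure.dirac w, ?_, ?_, ?_⟩
  · intro k
    exact (i1 k).add_measure (i2 k)
  · simp [hu, hw]
  · intro k
    rw [moment, integral_add_measure (i1 k) (i2 k), integral_smul_measure, integral_smul_measure,
      integral_dirac, integral_dirac, ENNReal.toReal_ofReal ha, ENNReal.toReal_ofReal hb]
    simp

lemma hk_three_W {F : ℝ → ℝ}
    (h : ∀ s ∈ momentSet (Set.Ici (0 : ℝ)),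
          (fun k => F (s k)) ∈ momentSet (Set.Ici (0 : ℝ))) : HkW F := by
  have hq : ∀ s ∈ momentSet (Set.Ici (0 : ℝ)), ∀ (n : ℕ) (v : Fin n → ℝ),
      0 ≤ ∑ i, ∑ j, v i * v j * F (s ((i:ℕ) + (j:ℕ))) := by
    intro s hs n v
    obtain ⟨ν, hν, -, e⟩ := h s hs
    have := hk_quad_moment hν v
    simpa only [← e] using this
  refine ⟨?_, ?_, ?_⟩
  · have := hq _ (hk_two_atom 0 0 0 0 le_rfl le_rfl le_rfl le_rfl) 1 (fun _ => 1)
    simpa using this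
  · intro x y hx hxy
    have := hq _ (hk_two_atom (y - x) x 0 1 (by linarith) hx le_rfl zero_le_one) 2 ![1, -1]
    simp [Fin.sum_univ_two] at this
    linarith
  · intro n v a t u ha ht hu
    have := hq _ (hk_two_atom a t 1 u ha ht zero_le_one hu.le) n v
    simpa using this

/-- iterated multiplicative convolution -/
noncomputable def hkConv (μ : Measure ℝ) : ℕ → Measure ℝ
  | 0 => Measure.dirac 1
  | n+1 => ((hkConv μ n).prod μ).map (fun p => p.1 * p.2)

lemma hk_conv (μ : Measure ℝ) (hμ : IsAdmissible μ) (hs : μ (Set.Ici 0)ᶜ = 0) (n : ℕ) :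
    IsFiniteMeasure (hkConv μ n) ∧ IsAdmissible (hkConv μ n) ∧ (hkConv μ n) (Set.Ici 0)ᶜ = 0 ∧
      ∀ k, moment (hkConv μ n) k = moment μ k ^ n := by
  have hfin : IsFiniteMeasure μ := by
    have := hμ 0
    simp only [pow_zero] at this
    exact (integrable_const_iff_isFiniteMeasure one_ne_zero).1 this
  have hmeas : Measurable (fun p : ℝ × ℝ => p.1 * p.2) := by fun_prop
  induction n with
  | zero =>
    refine ⟨by unfold hkConv; infer_instance, fun k => integrable_dirac (by simp), ?_, ?_⟩
    · simp [hkConv]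
    · intro k; simp [moment, hkConv]
  | succ n ih =>
    obtain ⟨h1, h2, h3, h4⟩ := ih
    have hint : ∀ k : ℕ, Integrable (fun p : ℝ × ℝ => p.1 ^ k * p.2 ^ k) ((hkConv μ n).prod μ) :=
      fun k => (h2 k).mul_prod (hμ k)
    refine ⟨by unfold hkConv; infer_instance, ?_, ?_, ?_⟩
    · intro k
      unfold hkConv
      rw [integrable_map_measure (by fun_prop) hmeas.aemeasurable]
      simpa [Function.comp_def, mul_pow] using hint k
    · unfold hkConv
      rw [Measure.map_apply hmeas measurableSet_Ici.compl]
      refine measure_mono_null (t := ((Set.Ici 0)ᶜ ×ˢ Set.univ) ∪ (Set.univ ×ˢ (Set.Ici 0)ᶜ)) ?_ ?_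
      · rintro ⟨x, y⟩ hxy
        by_contra hc
        simp at hxy hc
        exact absurd hxy (not_lt.2 (mul_nonneg hc.1 hc.2))
      · refine measure_union_null ?_ ?_
        · rw [Measure.prod_prod, h3, zero_mul]
        · rw [Measure.prod_prod, hs, mul_zero]
    · intro k
      rw [moment]
      unfold hkConv
      rw [integral_map hmeas.aemeasurable (by fun_prop)]
      simp only [mul_pow]
      rw [integral_prod_mul (fun x => x ^ k) (fun y => y ^ k)]
      have := h4 k
      rw [moment] at this
      rw [this, pow_succ]; rfl

lemma hk_ame_moment {G : ℝ → ℝ} (hG : AbsolutelyMonotonicEntire G) (μ : Measure ℝ)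
    (hμ : IsAdmissible μ) (hs : μ (Set.Ici 0)ᶜ = 0) :
    (fun k => G (moment μ k)) ∈ momentSet (Set.Ici (0:ℝ)) := by
  obtain ⟨c, hc, hG⟩ := hG
  have hcv := hk_conv μ hμ hs
  let ν : ℕ → Measure ℝ := fun n => ENNReal.ofReal (c n) • hkConv μ n
  have hae : ∀ n, ∀ᵐ x ∂(ν n), 0 ≤ x := by
    intro n
    refine Measure.ae_smul_measure ?_ _
    have := (hcv n).2.2.1
    rw [ae_iff]
    exact this
  have hmm : ∀ n k, ∫ x, x ^ k ∂(ν n) = c n * moment μ k ^ n := by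
    intro n k
    rw [integral_smul_measure, ENNReal.toReal_ofReal (hc n), smul_eq_mul, ← (hcv n).2.2.2 k]; rfl
  have hi : ∀ n k, Integrable (fun x : ℝ => x ^ k) (ν n) := fun n k =>
    ((hcv n).2.1 k).smul_measure ENNReal.ofReal_ne_top
  have hint : ∀ k, Integrable (fun x : ℝ => x ^ k) (Measure.sum ν) := by
    intro k
    refine ⟨by fun_prop, ?_⟩
    rw [HasFiniteIntegral, lintegral_sum_measure]
    have e : ∀ n, ∫⁻ x, ‖x ^ k‖ₑ ∂(ν n) = ENNReal.ofReal (c n * moment μ k ^ n) := by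
      intro n
      rw [← hmm, ofReal_integral_eq_lintegral_ofReal (hi n k)]
      · refine lintegral_congr_ae ?_
        filter_upwards [hae n] with x hx
        rw [Real.enorm_of_nonneg (by positivity)]
      · filter_upwards [hae n] with x hx
        positivity
    simp only [e]
    rw [← ENNReal.ofReal_tsum_of_nonneg]
    · exact ENNReal.ofReal_lt_top
    · intro n
      rw [← hmm]
      exact integral_nonneg_of_ae (by filter_upwards [hae n] with x hx; positivity)
    · exact (hG _).summable
  refine ⟨Measure.sum ν, hint, ?_, ?_⟩
  · rw [Measure.sum_apply _ measurableSet_Ici.compl]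
    simp only [ν, Measure.smul_apply, (hcv _).2.2.1, smul_zero, tsum_zero]
  · intro k
    have := hasSum_integral_measure (hint k)
    simp only [hmm] at this
    exact (hG _).unique this

lemma hk_four_three {F G : ℝ → ℝ} (hG : AbsolutelyMonotonicEntire G)
    (hFG : ∀ x ∈ Set.Ioi (0 : ℝ), F x = G x) (hF0 : 0 ≤ F 0)
    (hle : ∀ x, 0 ≤ x → F 0 ≤ F x) :
    ∀ s ∈ momentSet (Set.Ici (0 : ℝ)), (fun k => F (s k)) ∈ momentSet (Set.Ici (0 : ℝ)) := by
  rintro s ⟨μ, hμ, hs, e⟩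
  have hae : ∀ᵐ x ∂μ, 0 ≤ x := by
    rw [ae_iff]; exact hs
  have hnn : ∀ k, 0 ≤ᵐ[μ] fun x : ℝ => x ^ k := fun k => by
    filter_upwards [hae] with x hx; exact pow_nonneg hx k
  have hs0 : ∀ k, 0 ≤ s k := fun k => by
    rw [e]; exact integral_nonneg_of_ae (hnn k)
  by_cases hp : ∀ k, 0 < s k
  · have := hk_ame_moment hG μ hμ hs
    convert this using 2 with k
    rw [← e, hFG _ (hp k)]
  · push Not at hp
    obtain ⟨k, hk⟩ := hp
    have hk0 : moment μ k = 0 := by rw [← e]; exact le_antisymm hk (hs0 k)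
    have h1 := (integral_eq_zero_iff_of_nonneg_ae (hnn k) (hμ k)).1 hk0
    have h2 : ∀ m, 1 ≤ m → s m = 0 := by
      intro m hm
      rw [e]
      refine integral_eq_zero_of_ae ?_
      filter_upwards [h1] with x hx
      have hx0 : x = 0 := by simpa using eq_zero_of_pow_eq_zero hx
      simp [hx0]; omega
    have := hk_two_atom (F (s 0) - F 0) (F 0) 0 1 (by linarith [hle _ (hs0 0)]) hF0 le_rfl zero_le_one
    convert this using 2 with m
    rcases Nat.eq_zero_or_pos m with rfl | hm
    · simp
    · rw [h2 m hm]; simp [hm.ne']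

/-- Characterization of the entrywise preservers of totally non-negative Hankel matrices. -/
theorem totally_nonneg_hankel_preserver_TFAE (F : ℝ → ℝ) :
    List.TFAE
      [∀ (n : ℕ) (A : Matrix (Fin n) (Fin n) ℝ), IsHankelMat A → TotallyNonneg A →
          (A.map F).PosSemidef,
        ∀ (n : ℕ) (A : Matrix (Fin n) (Fin n) ℝ), IsHankelMat A → TotallyNonneg A →
          IsHankelMat (A.map F) ∧ TotallyNonneg (A.map F),
        ∀ s ∈ momentSet (Set.Ici (0 : ℝ)),
          (fun k => F (s k)) ∈ momentSet (Set.Ici (0 : ℝ)),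
        ∃ G : ℝ → ℝ, AbsolutelyMonotonicEntire G ∧ (∀ x ∈ Set.Ioi (0 : ℝ), F x = G x) ∧
          0 ≤ F 0 ∧ ∃ L : ℝ, Tendsto F (nhdsWithin 0 (Set.Ioi 0)) (nhds L) ∧ F 0 ≤ L] := by
  tfae_have 2 → 1 := by
    intro h n A h1 h2
    exact hk_tn_psd (h n A h1 h2).1 (h n A h1 h2).2
  tfae_have 1 → 4 := fun h => hk_W_four (hk_one_W h)
  tfae_have 3 → 4 := fun h => hk_W_four (hk_three_W h)
  tfae_have 4 → 2 := by
    rintro ⟨G, hG, hFG, hF0, hL⟩ n A h hA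
    exact hk_four_two hG hFG hF0 hL n A h hA
  tfae_have 4 → 3 := by
    rintro ⟨G, hG, hFG, hF0, hL⟩
    exact hk_four_three hG hFG hF0 (hk_four_le hG hFG hL)
  tfae_finish
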